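/- Let G be a connected graph and T ⊆ V(G). If G does not contain a T-join, then for every vertex v ∈ V(G) \ T, the graph G contains a (T ∪ {v})-join. -/

import Mathlib

namespace SimpleGraph

variable {V : Type*}

/-- A `T`-join in `G`: a set `P` of (oriented) paths, pairwise edge-disjoint, each with two
distinct endpoints lying in `T`, such that every vertex of `T` is an endpoint of exactly one
path of `P`. -/
def IsTJoin (G : SimpleGraph V) (T : Set V) (P : Set (Σ u : V, Σ v : V, G.Walk u v)) : Prop :=
  (∀ p ∈ P, p.2.2.IsPath ∧ p.1 ≠ p.2.1 ∧ p.1 ∈ T ∧ p.2.1 ∈ T) ∧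
  (∀ p ∈ P, ∀ q ∈ P, p ≠ q → ∀ e ∈ p.2.2.edges, e ∉ q.2.2.edges) ∧
  (∀ t ∈ T, ∃! p, p ∈ P ∧ (p.1 = t ∨ p.2.1 = t))

/-- `G` contains a `T`-join. -/
def HasTJoin (G : SimpleGraph V) (T : Set V) : Prop := ∃ P, G.IsTJoin T P

end SimpleGraph

namespace TJ

universe u

variable {V : Type*}

/-- Reachability along the parent edges `w — f w` with `w ∈ F`. -/
def Reach (f : V → V) (F : Set V) : V → V → Prop :=
  Relation.EqvGen (fun x y => x ∈ F ∧ y = f x)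

lemma Reach.mono {f : V → V} {F F' : Set V} (hF : F ⊆ F') {a b : V} (h : Reach f F a b) :
    Reach f F' a b :=
  Relation.EqvGen.mono (r := fun x y => x ∈ F ∧ y = f x) (p := fun x y => x ∈ F' ∧ y = f x)
    (fun _ _ hx => ⟨hF hx.1, hx.2⟩) _ _ h

/-- An abstract join: the parent edges labelled by `A` contain a join of `X`. -/
def Jn (f : V → V) (A X : Set V) : Prop :=
  ∃ (p : V → V) (F : V → Set V), 
    (∀ t ∈ X, p t ∈ X ∧ p t ≠ t ∧ p (p t) = t ∧ F (p t) = F t ∧ F t ⊆ A ∧ Reach f (F t) t (p t)) ∧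
    (∀ s ∈ X, ∀ t ∈ X, s ≠ t → s ≠ p t → Disjoint (F s) (F t))

lemma Jn.mono {f : V → V} {A B X : Set V} (h : Jn f A X) (hAB : A ⊆ B) : Jn f B X := by
  obtain ⟨p, F, h1, h2⟩ := h
  refine ⟨p, F, fun t ht => ?_, h2⟩
  obtain ⟨a, b, c, d, e, g⟩ := h1 t ht
  exact ⟨a, b, c, d, e.trans hAB, g⟩

lemma Jn.iUnion {f : V → V} {ι : Sort*} {A X : ι → Set V} (h : ∀ i, Jn f (A i) (X i))
    (hA : ∀ i j, i ≠ j → Disjoint (A i) (A j)) (hX : ∀ i j, i ≠ j → Disjoint (X i) (X j)) :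
    Jn f (⋃ i, A i) (⋃ i, X i) := by
  classical
  choose p F h1 h2 using h
  by_cases hne : Nonempty ι
  swap
  · refine ⟨id, fun _ => ∅, ?_, ?_⟩ <;> intro t ht <;> simp at ht <;> exact (hne ⟨ht.choose⟩).elim
  have : ∀ t : V, ∃ i, t ∈ (⋃ i, X i) → t ∈ X i := by
    intro t
    by_cases ht : t ∈ ⋃ i, X i
    · obtain ⟨i, hi⟩ := Set.mem_iUnion.1 ht
      exact ⟨i, fun _ => hi⟩
    · exact ⟨hne.some, fun h => (ht h).elim⟩
  choose k hk using this
  have hku : ∀ t i, t ∈ X i → k t = i := by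
    intro t i hi
    by_contra hc
    exact Set.disjoint_left.1 (hX _ _ hc) (hk t (Set.mem_iUnion.2 ⟨i, hi⟩)) hi
  refine ⟨fun t => p (k t) t, fun t => F (k t) t, ?_, ?_⟩
  · intro t ht
    obtain ⟨a, b, c, d, e, g⟩ := h1 (k t) t (hk t ht)
    have hkk := hku _ _ a
    simp only [hkk]
    exact ⟨Set.mem_iUnion.2 ⟨_, a⟩, b, c, d, e.trans (Set.subset_iUnion A _), g⟩
  · intro s hs t ht hst hsp
    by_cases hc : k s = k t
    · simp only at hsp ⊢
      rw [hc]
      exact h2 (k t) s (hc ▸ hk s hs) t (hk t ht) hst hsp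
    · exact (hA _ _ hc).mono (h1 _ s (hk s hs)).2.2.2.2.1 (h1 _ t (hk t ht)).2.2.2.2.1

lemma Jn.union {f : V → V} {A B X Y : Set V} (h1 : Jn f A X) (h2 : Jn f B Y)
    (hA : Disjoint A B) (hX : Disjoint X Y) : Jn f (A ∪ B) (X ∪ Y) := by
  have := Jn.iUnion (f := f) (ι := Bool) (A := fun b => cond b A B) (X := fun b => cond b X Y)
    (by rintro (_ | _) <;> assumption)
    (by rintro (_ | _) (_ | _) <;> simp [hA, hA.symm])
    (by rintro (_ | _) (_ | _) <;> simp [hX, hX.symm])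
  rwa [Set.union_eq_iUnion, Set.union_eq_iUnion]

lemma Jn.pair {f : V → V} {F : Set V} {a b : V} (hab : a ≠ b) (h : Reach f F a b) :
    Jn f F {a, b} := by
  classical
  refine ⟨fun t => if t = a then b else a, fun _ => F, ?_, ?_⟩
  · rintro t (rfl | rfl)
    · simp [hab.symm, h]
    · simp only [hab.symm, if_false]
      simp [hab]
      exact h.symm
  · rintro s (rfl | rfl) t (rfl | rfl) h1 h2 <;> simp_all

lemma Jn.extract {f : V → V} {A X : Set V} (h : Jn f A X) {x : V} (hx : x ∈ X) :
    ∃ y ∈ X, y ≠ x ∧ ∃ F ⊆ A, Reach f F x y ∧ Jn f (A \ F) (X \ {x, y}) := by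
  obtain ⟨p, F, h1, h2⟩ := h
  obtain ⟨a, b, c, d, e, g⟩ := h1 x hx
  refine ⟨p x, a, b, F x, e, g, p, F, ?_, ?_⟩
  · rintro t ⟨ht, htn⟩
    simp only [Set.mem_insert_iff, Set.mem_singleton_iff, not_or] at htn
    obtain ⟨a', b', c', d', e', g'⟩ := h1 t ht
    refine ⟨⟨a', ?_⟩, b', c', d', ?_, g'⟩
    · simp only [Set.mem_insert_iff, Set.mem_singleton_iff, not_or]
      constructor
      · intro h; apply htn.2; rw [← h, c']
      · intro h; apply htn.1; rw [← c', h, c]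
    · exact Set.subset_sdiff.2 ⟨e', h2 t ht x hx htn.1 htn.2⟩
  · intro s hs t ht
    exact h2 s hs.1 t ht.1

lemma Jn.merge {f : V → V} {A B X Y : Set V} {z : V} (h1 : Jn f A (insert z X))
    (h2 : Jn f B (insert z Y)) (hA : Disjoint A B) (hX : Disjoint X Y) (hzX : z ∉ X)
    (hzY : z ∉ Y) : Jn f (A ∪ B) (X ∪ Y) := by
  obtain ⟨y, hy, hyz, F, hF, r, j⟩ := h1.extract (Set.mem_insert z X)
  obtain ⟨y', hy', hyz', F', hF', r', j'⟩ := h2.extract (Set.mem_insert z Y)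
  have hy : y ∈ X := by simpa [hyz] using hy
  have hy' : y' ∈ Y := by simpa [hyz'] using hy'
  have e1 : insert z X \ {z, y} = X \ {y} := by
    ext t; simp only [Set.mem_sdiff, Set.mem_insert_iff, Set.mem_singleton_iff]; grind
  have e2 : insert z Y \ {z, y'} = Y \ {y'} := by
    ext t; simp only [Set.mem_sdiff, Set.mem_insert_iff, Set.mem_singleton_iff]; grind
  rw [e1] at j
  rw [e2] at j'
  have hne : y ≠ y' := fun h => Set.disjoint_left.1 hX hy (h ▸ hy')
  have pr : Jn f (F ∪ F') {y, y'} := Jn.pair hne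
    (Relation.EqvGen.trans _ _ _ ((r.mono Set.subset_union_left).symm)
      (r'.mono Set.subset_union_right))
  rw [Set.disjoint_left] at hA hX
  have q := (j.union j' (by rw [Set.disjoint_left]; grind) (by rw [Set.disjoint_left]; grind)).union
    pr (by rw [Set.disjoint_left]; grind) (by rw [Set.disjoint_left]; grind)
  have e : (X \ {y} ∪ Y \ {y'}) ∪ {y, y'} = X ∪ Y := by ext t; grind
  rw [e] at q
  exact q.mono (by intro t; grind)

open scoped symmDiff

lemma Jn.mrg {f : V → V} {A B X Y : Set V} {z : V} (h1 : Jn f A X)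
    (h2 : Jn f B (insert z Y)) (hA : Disjoint A B) (hX : Disjoint X Y)
    (hzY : z ∉ Y) : Jn f (A ∪ B) ((X ∆ {z}) ∪ Y) := by
  rw [Set.disjoint_left] at hX
  by_cases hz : z ∈ X
  · have e : X = insert z (X \ {z}) := by ext t; grind
    rw [e] at h1
    have := h1.merge h2 hA (by rw [Set.disjoint_left]; grind) (by simp) hzY
    convert this using 2
    ext t; simp only [Set.mem_symmDiff]; grind
  · have := h1.union h2 hA (by rw [Set.disjoint_left]; grind)
    convert this using 1
    ext t; simp only [Set.mem_symmDiff, Set.mem_union]; grind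

lemma Jn.edge {f : V → V} {A X : Set V} {z : V} (h : Jn f A (X ∆ {z})) (hz : z ∉ A)
    (hf : f z ∉ X) : Jn f (insert z A) (insert (f z) X) := by
  by_cases hfz : f z = z
  · rw [hfz] at hf ⊢
    have e : X ∆ {z} = insert z X := by ext t; simp only [Set.mem_symmDiff]; grind
    rw [e] at h
    exact h.mono (Set.subset_insert _ _)
  · have pr : Jn f {z} (insert z {f z}) := Jn.pair (Ne.symm hfz)
      (Relation.EqvGen.rel _ _ ⟨rfl, rfl⟩)
    have := h.mrg pr (by simpa using hz)
      (by simp only [Set.disjoint_singleton_right, Set.mem_symmDiff]; grind) (by simpa using Ne.symm hfz)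
    have e : ((X ∆ {z}) ∆ {z}) ∪ {f z} = insert (f z) X := by
      ext t; simp only [Set.mem_symmDiff, Set.mem_union]; grind
    rw [e] at this
    exact this.mono (by intro t; grind)

lemma exists_pairing (ι : Type u) : ∃ K : Type, ∃ L : Type u,
    (Nonempty (ι ≃ (K × L) × Bool) ∨ Nonempty (ι ≃ Option ((K × L) × Bool))) := by
  classical
  by_cases h : Infinite ι
  · refine ⟨Unit, ι, Or.inl ?_⟩
    rw [← Cardinal.lift_mk_eq']
    have := Cardinal.mul_eq_left (Cardinal.aleph0_le_mk ι)
      (le_trans (Cardinal.natCast_lt_aleph0 (n := 2)).le (Cardinal.aleph0_le_mk ι)) (by simp)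
    simpa using this.symm
  · have := @Fintype.ofFinite ι (not_infinite_iff_finite.1 h)
    rcases Nat.even_or_odd' (Fintype.card ι) with ⟨k, hk | hk⟩
    · refine ⟨Fin k, PUnit, Or.inl ⟨Fintype.equivOfCardEq ?_⟩⟩
      simp [hk, mul_comm]
    · refine ⟨Fin k, PUnit, Or.inr ⟨Fintype.equivOfCardEq ?_⟩⟩
      simp [hk, mul_comm]

lemma Jn.star {f : V → V} {ι : Type*} {A X : ι → Set V} {x : V}
    (h : ∀ i, Jn f (A i) (insert x (X i)))
    (hA : ∀ i j, i ≠ j → Disjoint (A i) (A j)) (hX : ∀ i j, i ≠ j → Disjoint (X i) (X j))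
    (hx : ∀ i, x ∉ X i) :
    Jn f (⋃ i, A i) (⋃ i, X i) ∨ Jn f (⋃ i, A i) (insert x (⋃ i, X i)) := by
  obtain ⟨K, L, ⟨⟨e⟩⟩ | ⟨⟨e⟩⟩⟩ := exists_pairing ι
  · left
    have hm : ∀ k : K × L, Jn f (A (e.symm (k, true)) ∪ A (e.symm (k, false)))
        (X (e.symm (k, true)) ∪ X (e.symm (k, false))) := fun k =>
      (h _).merge (h _) (hA _ _ (by simp)) (hX _ _ (by simp)) (hx _) (hx _)
    have := Jn.iUnion hm
      (by
        intro i j hij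
        simp only [Set.disjoint_union_left, Set.disjoint_union_right]
        refine ⟨⟨?_, ?_⟩, ?_, ?_⟩ <;> apply hA <;> simp [hij])
      (by
        intro i j hij
        simp only [Set.disjoint_union_left, Set.disjoint_union_right]
        refine ⟨⟨?_, ?_⟩, ?_, ?_⟩ <;> apply hX <;> simp [hij])
    have key : ∀ Z : ι → Set V, (⋃ k, (Z (e.symm (k, true)) ∪ Z (e.symm (k, false)))) = ⋃ i, Z i := by
      intro Z
      rw [← e.symm.surjective.iUnion_comp]
      ext t
      simp only [Set.mem_iUnion, Set.mem_union, Prod.exists, Bool.exists_bool]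
      grind
    rwa [key, key] at this
  · right
    have hm : ∀ k : K × L, Jn f (A (e.symm (some (k, true))) ∪ A (e.symm (some (k, false))))
        (X (e.symm (some (k, true))) ∪ X (e.symm (some (k, false)))) := fun k =>
      (h _).merge (h _) (hA _ _ (by simp)) (hX _ _ (by simp)) (hx _) (hx _)
    have := (Jn.iUnion hm
      (by
        intro i j hij
        simp only [Set.disjoint_union_left, Set.disjoint_union_right]
        refine ⟨⟨?_, ?_⟩, ?_, ?_⟩ <;> apply hA <;> simp [hij])
      (by
        intro i j hij
        simp only [Set.disjoint_union_left, Set.disjoint_union_right]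
        refine ⟨⟨?_, ?_⟩, ?_, ?_⟩ <;> apply hX <;> simp [hij])).union (h (e.symm none))
      (by
        simp only [Set.disjoint_union_left, Set.disjoint_iUnion_left]
        intro k
        refine ⟨?_, ?_⟩ <;> apply hA <;> simp)
      (by
        simp only [Set.disjoint_union_left, Set.disjoint_iUnion_left, Set.disjoint_insert_right]
        refine ⟨by simp [hx], ?_⟩
        intro k
        refine ⟨?_, ?_⟩ <;> apply hX <;> simp)
    have key : ∀ Z : ι → Set V, (⋃ k, (Z (e.symm (some (k, true))) ∪ Z (e.symm (some (k, false))))) ∪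
        Z (e.symm none) = ⋃ i, Z i := by
      intro Z
      rw [← e.symm.surjective.iUnion_comp]
      ext t
      simp only [Set.mem_iUnion, Set.mem_union, Prod.exists, Bool.exists_bool, Option.exists]
      grind
    rwa [key, Set.union_insert, key] at this

/-! ### The rooted tree given by a parent map -/

section tree

/-- Descendants of `y`. -/
def S (f : V → V) (y : V) : Set V := {x | ∃ n : ℕ, f^[n] x = y}

/-- Rooted tree data. -/
structure Tree (f : V → V) (r : V) (h : V → ℕ) (T : Set V) : Prop where
  root : f r = r
  lt : ∀ x, x ≠ r → h (f x) < h x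
  notMem : r ∉ T

variable {f : V → V} {r : V} {h : V → ℕ} {T : Set V}

lemma S_self (y : V) : y ∈ S f y := ⟨0, rfl⟩

lemma S_parent {x c : V} (hx : x ∈ S f c) : x ∈ S f (f c) := by
  obtain ⟨n, rfl⟩ := hx
  exact ⟨n + 1, Function.iterate_succ_apply' f n x⟩

lemma S_of_parent {x c : V} (hx : f x ∈ S f c) : x ∈ S f c := by
  obtain ⟨n, rfl⟩ := hx
  exact ⟨n + 1, rfl⟩

lemma S_up {x y : V} (hx : x ∈ S f y) (hne : x ≠ y) : f x ∈ S f y := by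
  obtain ⟨_ | n, hn⟩ := hx
  · exact (hne hn).elim
  · exact ⟨n, hn⟩

lemma S_trans {x y z : V} (hx : x ∈ S f y) (hy : y ∈ S f z) : x ∈ S f z := by
  obtain ⟨n, rfl⟩ := hx
  obtain ⟨m, rfl⟩ := hy
  exact ⟨m + n, Function.iterate_add_apply f m n x⟩

lemma S_comparable {x a b : V} (ha : x ∈ S f a) (hb : x ∈ S f b) : a ∈ S f b ∨ b ∈ S f a := by
  obtain ⟨n, rfl⟩ := ha
  obtain ⟨m, rfl⟩ := hb
  rcases le_total n m with hnm | hnm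
  · left
    refine ⟨m - n, ?_⟩
    rw [← Function.iterate_add_apply]
    congr 2; omega
  · right
    refine ⟨n - m, ?_⟩
    rw [← Function.iterate_add_apply]
    congr 2; omega

lemma Tree.le (t : Tree f r h T) (x : V) : h (f x) ≤ h x := by
  by_cases hx : x = r
  · rw [hx, t.root]
  · exact (t.lt x hx).le

lemma Tree.S_le (t : Tree f r h T) {x y : V} (hx : x ∈ S f y) : h y ≤ h x := by
  obtain ⟨n, rfl⟩ := hx
  induction n generalizing x with
  | zero => exact le_rfl
  | succ n ih => exact (ih (x := f x)).trans (t.le x)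

lemma Tree.S_ne_root (t : Tree f r h T) {x y : V} (hx : x ∈ S f y) (hne : x ≠ y) : x ≠ r := by
  rintro rfl
  obtain ⟨n, rfl⟩ := hx
  exact hne (Function.iterate_fixed t.root n).symm

lemma Tree.S_lt (t : Tree f r h T) {x y : V} (hx : x ∈ S f y) (hne : x ≠ y) : h y < h x :=
  lt_of_le_of_lt (t.S_le (S_up hx hne)) (t.lt x (t.S_ne_root hx hne))

lemma Tree.S_root (t : Tree f r h T) (x : V) : x ∈ S f r := by
  induction hn : h x using Nat.strong_induction_on generalizing x with
  | _ n ih =>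
    by_cases hx : x = r
    · rw [hx]; exact S_self r
    · exact S_of_parent (ih _ (hn ▸ t.lt x hx) _ rfl)

lemma Tree.parent_notMem (t : Tree f r h T) (z : V) : f z ∉ T ∩ S f z := by
  rintro ⟨h1, h2⟩
  by_cases hz : z = r
  · subst hz; rw [t.root] at h1; exact t.notMem h1
  · exact absurd (t.S_le h2) (not_le.2 (t.lt z hz))

/-- `c` is a child of `y`. -/
def Ch (f : V → V) (r : V) (c y : V) : Prop := f c = y ∧ c ≠ r

lemma Tree.exists_child (t : Tree f r h T) {x y : V} (hx : x ∈ S f y) (hne : x ≠ y) :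
    ∃ c, Ch f r c y ∧ x ∈ S f c := by
  induction hn : h x using Nat.strong_induction_on generalizing x with
  | _ n ih =>
    by_cases hf : f x = y
    · exact ⟨x, ⟨hf, t.S_ne_root hx hne⟩, S_self x⟩
    · obtain ⟨c, hc, hxc⟩ := ih _ (hn ▸ t.lt x (t.S_ne_root hx hne)) (S_up hx hne) hf rfl
      exact ⟨c, hc, S_of_parent hxc⟩

lemma Tree.child_notMem (t : Tree f r h T) {c y : V} (hc : Ch f r c y) : y ∉ S f c := by
  intro hy
  have := t.S_le hy
  have := t.lt c hc.2
  rw [hc.1] at this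
  omega

lemma Tree.child_unique (t : Tree f r h T) {x c c' y : V} (hc : Ch f r c y) (hc' : Ch f r c' y)
    (hx : x ∈ S f c) (hx' : x ∈ S f c') : c = c' := by
  by_contra hne
  rcases S_comparable hx hx' with hs | hs
  · have := S_up hs hne
    rw [hc.1] at this
    exact t.child_notMem hc' this
  · have := S_up hs (Ne.symm hne)
    rw [hc'.1] at this
    exact t.child_notMem hc this

/-- `y` is typed: the subtree of `y` (with the edge to the parent) can be resolved. -/
def Ty (f : V → V) (T : Set V) (y : V) : Prop :=
  Jn f (S f y) (T ∩ S f y) ∨ Jn f (S f y) (insert (f y) (T ∩ S f y))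

/-- `z` together with the subtrees of its typed children. -/
def S' (f : V → V) (r : V) (T : Set V) (z : V) : Set V :=
  {x | x = z ∨ ∃ c, Ch f r c z ∧ Ty f T c ∧ x ∈ S f c}

lemma S'_sub {z : V} : S' f r T z ⊆ S f z := by
  rintro x (rfl | ⟨c, hc, -, hx⟩)
  · exact S_self _
  · exact hc.1 ▸ S_parent hx

lemma S'_self {z : V} : z ∈ S' f r T z := Or.inl rfl

open scoped symmDiff

lemma Tree.locl (t : Tree f r h T) (z : V) :
    Jn f (S' f r T z \ {z}) (T ∩ S' f r T z) ∨ Jn f (S' f r T z \ {z}) ((T ∩ S' f r T z) ∆ {z}) := by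
  classical
  let I0 := {c // Ch f r c z ∧ Jn f (S f c) (T ∩ S f c)}
  let I1 := {c // Ch f r c z ∧ ¬ Jn f (S f c) (T ∩ S f c) ∧ Ty f T c}
  have dis : ∀ c c', Ch f r c z → Ch f r c' z → c ≠ c' → Disjoint (S f c) (S f c') := by
    intro c c' hc hc' hne
    rw [Set.disjoint_left]
    intro x hx hx'
    exact hne (t.child_unique hc hc' hx hx')
  have j0 : Jn f (⋃ c : I0, S f c.1) (⋃ c : I0, T ∩ S f c.1) := by
    apply Jn.iUnion
    · intro c; exact c.2.2
    · intro i j hij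
      exact dis _ _ i.2.1 j.2.1 (fun h => hij (Subtype.ext h))
    · intro i j hij
      exact (dis _ _ i.2.1 j.2.1 (fun h => hij (Subtype.ext h))).mono Set.inter_subset_right
        Set.inter_subset_right
  have j1 := Jn.star (f := f) (ι := I1) (A := fun c => S f c.1) (X := fun c => T ∩ S f c.1) (x := z)
    (by
      intro c
      have := c.2.2.2.resolve_left c.2.2.1
      rwa [c.2.1.1] at this)
    (by
      intro i j hij
      exact dis _ _ i.2.1 j.2.1 (fun h => hij (Subtype.ext h)))
    (by
      intro i j hij
      exact (dis _ _ i.2.1 j.2.1 (fun h => hij (Subtype.ext h))).mono Set.inter_subset_right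
        Set.inter_subset_right)
    (by
      intro c hc
      exact t.child_notMem c.2.1 hc.2)
  have d01 : Disjoint (⋃ c : I0, S f c.1) (⋃ c : I1, S f c.1) := by
    simp only [Set.disjoint_iUnion_left, Set.disjoint_iUnion_right]
    intro i j
    refine dis _ _ j.2.1 i.2.1 ?_
    intro h
    exact i.2.2.1 (h ▸ j.2.2)
  have d01' : Disjoint (⋃ c : I0, T ∩ S f c.1) (⋃ c : I1, T ∩ S f c.1) :=
    d01.mono (Set.iUnion_mono fun _ => Set.inter_subset_right)
      (Set.iUnion_mono fun _ => Set.inter_subset_right)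
  have hz0 : z ∉ ⋃ c : I0, T ∩ S f c.1 := by
    simp only [Set.mem_iUnion, not_exists]
    intro c hc
    exact t.child_notMem c.2.1 hc.2
  have eA : (⋃ c : I0, S f c.1) ∪ (⋃ c : I1, S f c.1) = S' f r T z \ {z} := by
    ext x
    simp only [Set.mem_union, Set.mem_iUnion, Set.mem_sdiff, Set.mem_singleton_iff]
    constructor
    · rintro (⟨c, hc⟩ | ⟨c, hc⟩)
      · refine ⟨Or.inr ⟨c.1, c.2.1, Or.inl c.2.2, hc⟩, ?_⟩
        rintro rfl; exact t.child_notMem c.2.1 hc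
      · refine ⟨Or.inr ⟨c.1, c.2.1, c.2.2.2, hc⟩, ?_⟩
        rintro rfl; exact t.child_notMem c.2.1 hc
    · rintro ⟨h1 | ⟨c, h1, h2, h3⟩, h4⟩
      · exact (h4 h1).elim
      · by_cases hc : Jn f (S f c) (T ∩ S f c)
        · exact Or.inl ⟨⟨c, h1, hc⟩, h3⟩
        · exact Or.inr ⟨⟨c, h1, hc, h2⟩, h3⟩
  have eX : (⋃ c : I0, T ∩ S f c.1) ∪ (⋃ c : I1, T ∩ S f c.1) = T ∩ (S' f r T z \ {z}) := by
    rw [← eA, ← Set.inter_iUnion, ← Set.inter_iUnion, Set.inter_union_distrib_left]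
  have hzS : z ∈ S' f r T z := S'_self
  have key : Jn f (S' f r T z \ {z}) (T ∩ (S' f r T z \ {z})) ∨
      Jn f (S' f r T z \ {z}) (insert z (T ∩ (S' f r T z \ {z}))) := by
    rcases j1 with j1 | j1
    · left
      have := j0.union j1 d01 d01'
      rwa [eA, eX] at this
    · right
      have := j0.union j1 d01 (Set.disjoint_insert_right.2 ⟨hz0, d01'⟩)
      rwa [Set.union_insert, eA, eX] at this
  by_cases hzT : z ∈ T
  · have e1 : insert z (T ∩ (S' f r T z \ {z})) = T ∩ S' f r T z := by
      ext x; grind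
    have e2 : T ∩ (S' f r T z \ {z}) = (T ∩ S' f r T z) ∆ {z} := by
      ext x; simp only [Set.mem_symmDiff]; grind
    rw [e1, e2] at key
    exact key.symm
  · have e1 : insert z (T ∩ (S' f r T z \ {z})) = (T ∩ S' f r T z) ∆ {z} := by
      ext x; simp only [Set.mem_symmDiff]; grind
    have e2 : T ∩ (S' f r T z \ {z}) = (T ∩ S' f r T z) := by
      ext x; grind
    rw [e1, e2] at key
    exact key

lemma insert_sdiff_self {A : Set V} {z : V} (hz : z ∈ A) : insert z (A \ {z}) = A := by
  ext x; grind

lemma Tree.parent_notMem' (t : Tree f r h T) (z : V) : f z ∉ T ∩ S' f r T z :=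
  fun h => t.parent_notMem z ⟨h.1, S'_sub h.2⟩

lemma Tree.step (t : Tree f r h T) (z : V) (hz : ∀ c, Ch f r c z → Ty f T c) : Ty f T z := by
  have e : S' f r T z = S f z := by
    refine Set.Subset.antisymm S'_sub ?_
    intro x hx
    by_cases hxz : x = z
    · exact Or.inl hxz
    · obtain ⟨c, hc, hxc⟩ := t.exists_child hx hxz
      exact Or.inr ⟨c, hc, hz c hc, hxc⟩
  have := t.locl z
  rw [e] at this
  rcases this with j | j
  · exact Or.inl (j.mono Set.sdiff_subset)
  · right
    have := j.edge (by simp) (t.parent_notMem z)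
    rwa [insert_sdiff_self (S_self z)] at this

/-- `C` is a set of untyped descendants of `z`, closed under parents up to `z`. -/
def Chain (f : V → V) (r : V) (T : Set V) (z : V) (C : Set V) : Prop :=
  z ∈ C ∧ ∀ w ∈ C, w ≠ z → f w ∈ C ∧ w ≠ r ∧ ¬ Ty f T w

def clu (f : V → V) (r : V) (T : Set V) (C : Set V) : Set V := ⋃ w ∈ C, S' f r T w

def M (f : V → V) (r : V) (T : Set V) (z : V) : Prop :=
  ∃ C, Chain f r T z C ∧ Jn f (clu f r T C) (insert (f z) (T ∩ clu f r T C))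

def N (f : V → V) (r : V) (T : Set V) (z : V) : Prop :=
  ∃ C, Chain f r T z C ∧ Jn f (clu f r T C) (T ∩ clu f r T C)

def Rel (f : V → V) (r : V) (T : Set V) : V → V → Prop :=
  Relation.ReflTransGen (fun a b => Ch f r b a ∧ ¬ Ty f T b)

lemma Rel.mem_S {y z : V} (hr : Rel f r T y z) : z ∈ S f y := by
  induction hr with
  | refl => exact S_self _
  | tail _ h2 ih => 
    refine S_of_parent ?_
    rw [h2.1.1]; exact ih

lemma Tree.rel_untyped (t : Tree f r h T) {y w w' c : V} (hw : Rel f r T y w)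
    (hw' : Rel f r T y w') (hc : Ch f r c w) (hm : w' ∈ S f c) : ¬ Ty f T c := by
  induction hw' with
  | refl =>
    exact (t.child_notMem hc (S_trans hw.mem_S hm)).elim
  | @tail a b h1 h2 ih =>
    by_cases hb : b = c
    · exact hb ▸ h2.2
    · apply ih
      rw [← h2.1.1]
      exact S_up hm hb

lemma Tree.S'_unique (t : Tree f r h T) {y w w' x : V} (hw : Rel f r T y w)
    (hw' : Rel f r T y w') (hx : x ∈ S' f r T w) (hx' : x ∈ S' f r T w') : w = w' := by
  have aux : ∀ w w', Rel f r T y w → Rel f r T y w' → x ∈ S' f r T w → x ∈ S' f r T w' →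
      w' ∈ S f w → w = w' := by
    clear hw hw' hx hx' w w'
    intro w w' hw hw' hx hx' hs
    by_contra hne
    rcases hx with rfl | ⟨c, hc, hty, hxc⟩
    · have h1 := t.S_lt hs (Ne.symm hne)
      have h2 := t.S_le (S'_sub hx')
      omega
    · obtain ⟨c', hc', hwc'⟩ := t.exists_child hs (Ne.symm hne)
      have := t.child_unique hc hc' hxc (S_trans (S'_sub hx') hwc')
      subst this
      exact t.rel_untyped hw hw' hc hwc' hty
  rcases S_comparable (S'_sub hx) (S'_sub hx') with hs | hs
  · exact (aux w' w hw' hw hx' hx hs).symm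
  · exact aux w w' hw hw' hx hx' hs

lemma Tree.cover (t : Tree f r h T) {y x : V} (hx : x ∈ S f y) :
    ∃ w, Rel f r T y w ∧ x ∈ S' f r T w := by
  induction hn : h x using Nat.strong_induction_on generalizing x with
  | _ n ih =>
    by_cases hxy : x = y
    · subst hxy; exact ⟨x, Relation.ReflTransGen.refl, S'_self⟩
    · have hxr := t.S_ne_root hx hxy
      obtain ⟨w, hw, hfw⟩ := ih _ (hn ▸ t.lt x hxr) (S_up hx hxy) rfl
      rcases hfw with hfw | ⟨c, hc, hty, hxc⟩
      · by_cases hty : Ty f T x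
        · exact ⟨w, hw, Or.inr ⟨x, ⟨hfw, hxr⟩, hty, S_self x⟩⟩
        · exact ⟨x, hw.tail ⟨⟨hfw, hxr⟩, hty⟩, S'_self⟩
      · exact ⟨w, hw, Or.inr ⟨c, hc, hty, S_of_parent hxc⟩⟩

lemma Tree.chain_rel (t : Tree f r h T) {z w : V} {C : Set V} (hC : Chain f r T z C) (hw : w ∈ C) :
    Rel f r T z w := by
  induction hn : h w using Nat.strong_induction_on generalizing w with
  | _ n ih =>
    by_cases hwz : w = z
    · subst hwz; exact Relation.ReflTransGen.refl
    · obtain ⟨h1, h2, h3⟩ := hC.2 w hw hwz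
      exact (ih _ (hn ▸ t.lt w h2) h1 rfl).tail ⟨⟨rfl, h2⟩, h3⟩

lemma chain_single (z : V) : Chain f r T z {z} := ⟨rfl, fun _ hw hne => (hne hw).elim⟩

lemma clu_single (z : V) : clu f r T {z} = S' f r T z := by simp [clu]

lemma N_of_A0 {z : V} (j : Jn f (S' f r T z \ {z}) (T ∩ S' f r T z)) : N f r T z :=
  ⟨{z}, chain_single z, by rw [clu_single]; exact j.mono Set.sdiff_subset⟩

lemma Tree.M_of_A1 (t : Tree f r h T) {z : V}
    (j : Jn f (S' f r T z \ {z}) ((T ∩ S' f r T z) ∆ {z})) : M f r T z :=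
  ⟨{z}, chain_single z, by
    rw [clu_single]
    have := j.edge (by simp) (t.parent_notMem' z)
    rwa [insert_sdiff_self S'_self] at this⟩

lemma Tree.up (t : Tree f r h T) {y z : V} (hy : ¬ Ty f T y) (hc : Ch f r y z) (hM : M f r T y) :
    M f r T z ∧ N f r T z := by
  obtain ⟨C, hC, j⟩ := hM
  rw [hc.1] at j
  have hyz : Rel f r T z y := Relation.ReflTransGen.single ⟨hc, hy⟩
  have hzC : z ∉ C := fun hz => t.child_notMem hc (t.chain_rel hC hz).mem_S
  have hch : Chain f r T z (insert z C) := by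
    refine ⟨Or.inl rfl, ?_⟩
    rintro w (rfl | hw) hne
    · exact (hne rfl).elim
    · by_cases hwy : w = y
      · subst hwy
        exact ⟨Or.inl hc.1, hc.2, hy⟩
      · obtain ⟨h1, h2, h3⟩ := hC.2 w hw hwy
        exact ⟨Or.inr h1, h2, h3⟩
  have hclu : clu f r T (insert z C) = S' f r T z ∪ clu f r T C := by simp [clu]
  have hdis : Disjoint (S' f r T z) (clu f r T C) := by
    rw [Set.disjoint_left]
    intro x hx hx'
    simp only [clu, Set.mem_iUnion] at hx'
    obtain ⟨w, hw, hxw⟩ := hx'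
    have := t.S'_unique Relation.ReflTransGen.refl (hyz.trans (t.chain_rel hC hw)) hx hxw
    exact hzC (this ▸ hw)
  have hz : z ∉ clu f r T C := Set.disjoint_left.1 hdis S'_self
  have hz' : z ∉ T ∩ clu f r T C := fun h => hz h.2
  have dA : Disjoint (S' f r T z \ {z}) (clu f r T C) := hdis.mono_left Set.sdiff_subset
  have dX : Disjoint (T ∩ S' f r T z) (T ∩ clu f r T C) :=
    hdis.mono Set.inter_subset_right Set.inter_subset_right
  have dX' : Disjoint ((T ∩ S' f r T z) ∆ {z}) (T ∩ clu f r T C) := by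
    rw [Set.disjoint_left] at dX ⊢
    intro x hx
    simp only [Set.mem_symmDiff] at hx
    grind
  rcases t.locl z with A0 | A1
  · refine ⟨?_, N_of_A0 A0⟩
    have m := A0.mrg j dA dX hz'
    have e : (T ∩ S' f r T z) ∆ {z} ∪ T ∩ clu f r T C = (T ∩ (clu f r T (insert z C))) ∆ {z} := by
      rw [hclu]
      ext x; simp only [Set.mem_symmDiff, Set.mem_union]; grind
    rw [e] at m
    have hsub : clu f r T (insert z C) ⊆ S f z := by
      intro x hx
      simp only [clu, Set.mem_iUnion] at hx
      obtain ⟨w, hw, hxw⟩ := hx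
      exact S_trans (S'_sub hxw) (t.chain_rel hch hw).mem_S
    have m' := m.edge (by grind) (fun hf => t.parent_notMem z ⟨hf.1, hsub hf.2⟩)
    refine ⟨_, hch, m'.mono ?_⟩
    rw [hclu]
    have : z ∈ S' f r T z := S'_self
    intro x; grind
  · refine ⟨t.M_of_A1 A1, insert z C, hch, ?_⟩
    have m := A1.mrg j dA dX' hz'
    rw [symmDiff_symmDiff_cancel_right, ← Set.inter_union_distrib_left, ← hclu] at m
    refine m.mono ?_
    rw [hclu]
    exact Set.union_subset_union_left _ Set.sdiff_subset

lemma Tree.exists_rep (t : Tree f r h T) (y : V) (C : V → Set V) : ∃ R : V → V,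
    ∀ x, R x = (open Classical in
      if x ≠ y ∧ x ≠ r ∧ x ∈ C (R (f x)) then R (f x) else x) := by
  classical
  let wf : WellFounded (fun a b : V => h a < h b) := (measure h).wf
  let G : ∀ x : V, (∀ z, h z < h x → V) → V := fun x ih =>
    if hx : x ≠ r then (if x ≠ y ∧ x ∈ C (ih (f x) (t.lt x hx)) then ih (f x) (t.lt x hx) else x)
    else x
  refine ⟨wf.fix G, fun x => ?_⟩
  rw [wf.fix_eq]
  by_cases hx : x = r
  · simp [G, hx]
  · simp only [G, ne_eq, hx, not_false_eq_true, dite_true, true_and]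

lemma Tree.cov (t : Tree f r h T) {y : V} (hN : ∀ z, Rel f r T y z → N f r T z) :
    Jn f (S f y) (T ∩ S f y) := by
  classical
  choose! C hC hj using hN
  obtain ⟨R, hR⟩ := t.exists_rep y C
  -- the representative is a fixed point whose cluster contains the vertex
  have h1 : ∀ w, Rel f r T y w → Rel f r T y (R w) ∧ R (R w) = R w ∧ w ∈ C (R w) := by
    intro w hw
    induction hw with
    | refl =>
      have hy : R y = y := by rw [hR]; simp
      rw [hy]
      exact ⟨Relation.ReflTransGen.refl, hy, (hC y Relation.ReflTransGen.refl).1⟩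
    | @tail a b ha hb ih =>
      have hb' : Rel f r T y b := ha.tail hb
      by_cases hcond : b ≠ y ∧ b ≠ r ∧ b ∈ C (R (f b))
      · have e : R b = R (f b) := by rw [hR b, if_pos hcond]
        rw [e]
        rw [← hb.1.1] at ih
        exact ⟨ih.1, ih.2.1, hcond.2.2⟩
      · have e : R b = b := by rw [hR b, if_neg hcond]
        rw [e]
        exact ⟨hb', e, (hC b hb').1⟩
  have h2 : ∀ u, Rel f r T y u → R u = u → ∀ w ∈ C u, R w = u := by
    intro u hu hRu w hw
    have hrel := t.chain_rel (hC u hu) hw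
    induction hn : h w using Nat.strong_induction_on generalizing w with
    | _ n ih =>
      by_cases hwu : w = u
      · rw [hwu, hRu]
      · obtain ⟨a1, a2, a3⟩ := (hC u hu).2 w hw hwu
        have e := ih _ (hn ▸ t.lt w a2) (f w) a1 (t.chain_rel (hC u hu) a1) rfl
        have hwy : w ≠ y := by
          rintro rfl
          have b1 := t.S_le hu.mem_S
          have b2 := t.S_lt hrel.mem_S hwu
          omega
        rw [hR w, if_pos ⟨hwy, a2, by rw [e]; exact hw⟩, e]
  have crel : ∀ u, Rel f r T y u → ∀ w ∈ C u, Rel f r T y w := fun u hu w hw =>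
    hu.trans (t.chain_rel (hC u hu) hw)
  let I := {u // Rel f r T y u ∧ R u = u}
  have dis : ∀ i j : I, i ≠ j → Disjoint (clu f r T (C i.1)) (clu f r T (C j.1)) := by
    intro i j hij
    rw [Set.disjoint_left]
    intro x hx hx'
    simp only [clu, Set.mem_iUnion] at hx hx'
    obtain ⟨w, hw, hxw⟩ := hx
    obtain ⟨w', hw', hxw'⟩ := hx'
    have e := t.S'_unique (crel _ i.2.1 w hw) (crel _ j.2.1 w' hw') hxw hxw'
    subst e
    apply hij
    apply Subtype.ext
    rw [← h2 _ i.2.1 i.2.2 w hw, ← h2 _ j.2.1 j.2.2 w hw']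
  have := Jn.iUnion (f := f) (ι := I) (A := fun i => clu f r T (C i.1))
    (X := fun i => T ∩ clu f r T (C i.1)) (fun i => hj i.1 i.2.1) dis
    (fun i j hij => (dis i j hij).mono Set.inter_subset_right Set.inter_subset_right)
  rw [← Set.inter_iUnion] at this
  have e : (⋃ i : I, clu f r T (C i.1)) = S f y := by
    ext x
    simp only [clu, Set.mem_iUnion]
    constructor
    · rintro ⟨i, w, hw, hx⟩
      exact S_trans (S'_sub hx) (crel _ i.2.1 w hw).mem_S
    · intro hx
      obtain ⟨w, hw, hxw⟩ := t.cover hx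
      obtain ⟨a, b, c⟩ := h1 w hw
      exact ⟨⟨R w, a, b⟩, w, c, hxw⟩
  rwa [e] at this

lemma M_up (t : Tree f r h T) {c z : V} (hrel : Rel f r T c z) (hM : M f r T z) : M f r T c := by
  induction hrel with
  | refl => exact hM
  | tail _ h2 ih => exact ih (t.up h2.2 h2.1 hM).1

lemma Tree.root_typed (t : Tree f r h T) : Ty f T r := by
  by_contra hr
  have : ∃ y, Rel f r T r y ∧ ¬ N f r T y := by
    by_contra hc
    push Not at hc
    exact hr (Or.inl (t.cov hc))
  obtain ⟨y, hy, hNy⟩ := this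
  have hyT : ¬ Ty f T y := by
    cases hy with
    | refl => exact hr
    | tail _ h2 => exact h2.2
  apply hyT
  apply t.step
  intro c hc
  by_contra hcT
  apply hcT
  left
  apply t.cov
  intro z hz
  rcases t.locl z with A0 | A1
  · exact N_of_A0 A0
  · exact (hNy (t.up hcT hc (M_up t hz (t.M_of_A1 A1))).2).elim

end tree

/-! ### From abstract joins to joins of the graph -/

lemma reach_walk {G : SimpleGraph V} {f : V → V} {r : V} (hf : f r = r)
    (hadj : ∀ x, x ≠ r → G.Adj x (f x)) {F : Set V} {a b : V} (hr : Reach f F a b) :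
    ∃ w : G.Walk a b, ∀ e ∈ w.edges, ∃ x ∈ F, x ≠ r ∧ e = s(x, f x) := by
  induction hr with
  | rel x y h =>
    obtain ⟨hx, rfl⟩ := h
    by_cases hxr : x = r
    · rw [hxr, hf]
      exact ⟨SimpleGraph.Walk.nil, by simp⟩
    · exact ⟨(hadj x hxr).toWalk, by simpa using ⟨x, hx, hxr, by simp⟩⟩
  | refl x => exact ⟨SimpleGraph.Walk.nil, by simp⟩
  | symm x y _ ih =>
    obtain ⟨w, hw⟩ := ih
    exact ⟨w.reverse, by simpa using hw⟩
  | trans x y z _ _ ih1 ih2 =>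
    obtain ⟨w, hw⟩ := ih1
    obtain ⟨w', hw'⟩ := ih2
    refine ⟨w.append w', ?_⟩
    intro e he
    rw [SimpleGraph.Walk.edges_append, List.mem_append] at he
    exact he.elim (hw e) (hw' e)

lemma hasTJoin_of_jn {G : SimpleGraph V} {f : V → V} {r : V} {h : V → ℕ} {A X : Set V}
    (hf : f r = r) (hlt : ∀ x, x ≠ r → h (f x) < h x)
    (hadj : ∀ x, x ≠ r → G.Adj x (f x)) (j : Jn f A X) : G.HasTJoin X := by
  classical
  obtain ⟨p, F, h1, h2⟩ := j
  have : ∀ t, t ∈ X → ∃ w : G.Walk t (p t), w.IsPath ∧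
      ∀ e ∈ w.edges, ∃ x ∈ F t, x ≠ r ∧ e = s(x, f x) := by
    intro t ht
    obtain ⟨w, hw⟩ := reach_walk hf hadj (h1 t ht).2.2.2.2.2
    exact ⟨w.bypass, w.bypass_isPath, fun e he => hw e (w.edges_bypass_subset he)⟩
  choose w hwp hwe using this
  let lt : V → V → Prop := WellOrderingRel
  have lt_asymm : ∀ a b, lt a b → ¬ lt b a := fun a b => asymm_of WellOrderingRel
  have lt_tri : ∀ a b, lt a b ∨ a = b ∨ lt b a := fun a b => trichotomous_of WellOrderingRel a b
  refine ⟨{q | ∃ t, ∃ ht : t ∈ X, lt t (p t) ∧ q = ⟨t, p t, w t ht⟩}, ?_, ?_, ?_⟩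
  · rintro q ⟨t, ht, hl, rfl⟩
    exact ⟨hwp t ht, (h1 t ht).2.1.symm, ht, (h1 t ht).1⟩
  · rintro q ⟨s, hs, hl, rfl⟩ q' ⟨t, ht, hl', rfl⟩ hne e he he'
    obtain ⟨x, hx, hxr, rfl⟩ := hwe s hs e he
    obtain ⟨x', hx', hxr', he''⟩ := hwe t ht _ he'
    have hst : s ≠ t := by
      rintro rfl; exact hne rfl
    have hsp : s ≠ p t := by
      rintro rfl
      rw [(h1 t ht).2.2.1] at hl
      exact lt_asymm _ _ hl hl'
    have hxx : x = x' := by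
      rw [Sym2.eq_iff] at he''
      rcases he'' with h | h
      · exact h.1
      · have a := hlt x hxr
        have b := hlt x' hxr'
        rw [h.2] at a
        rw [← h.1] at b
        omega
    subst hxx
    exact Set.disjoint_left.1 (h2 s hs t ht hst hsp) hx hx'
  · intro t ht
    obtain ⟨a, b, c, -, -, -⟩ := h1 t ht
    rcases lt_tri t (p t) with hl | hl | hl
    · refine ⟨⟨t, p t, w t ht⟩, ⟨⟨t, ht, hl, rfl⟩, Or.inl rfl⟩, ?_⟩
      rintro q ⟨⟨s, hs, hl', rfl⟩, hq | hq⟩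
      · simp only at hq
        subst hq; rfl
      · simp only at hq
        subst hq
        rw [(h1 s hs).2.2.1] at hl
        exact (lt_asymm _ _ hl hl').elim
    · exact (b hl.symm).elim
    · refine ⟨⟨p t, p (p t), w (p t) a⟩, ⟨⟨p t, a, by rwa [c], rfl⟩, Or.inr c⟩, ?_⟩
      rintro q ⟨⟨s, hs, hl', rfl⟩, hq | hq⟩
      · simp only at hq
        subst hq
        exact (lt_asymm _ _ hl hl').elim
      · simp only at hq
        have : s = p t := by rw [← hq, (h1 s hs).2.2.1]
        subst this; rfl

end TJ

/-- If a connected graph `G` has no `T`-join, then it has a `(T ∪ {v})`-join for every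
vertex `v ∉ T`. -/
theorem hasTJoin_insert_of_not_hasTJoin {V : Type*} (G : SimpleGraph V) (hG : G.Connected)
    (T : Set V) (hT : ¬ G.HasTJoin T) (v : V) (hv : v ∉ T) :
    G.HasTJoin (insert v T) := by
  classical
  have hex : ∀ x, ∃ y, (x = v → y = v) ∧ (x ≠ v → G.Adj x y ∧ G.dist y v < G.dist x v) := by
    intro x
    by_cases hx : x = v
    · exact ⟨v, fun _ => rfl, fun h => (h hx).elim⟩
    · obtain ⟨w, hw⟩ := hG.exists_walk_length_eq_dist x v
      cases w with
      | nil => exact (hx rfl).elim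
      | @cons _ y _ ha w' =>
        refine ⟨y, fun h => (hx h).elim, fun _ => ⟨ha, ?_⟩⟩
        have := SimpleGraph.dist_le w'
        rw [SimpleGraph.Walk.length_cons] at hw
        omega
  choose f hf1 hf2 using hex
  have hf : f v = v := hf1 v rfl
  have hlt : ∀ x, x ≠ v → G.dist (f x) v < G.dist x v := fun x hx => (hf2 x hx).2
  have hadj : ∀ x, x ≠ v → G.Adj x (f x) := fun x hx => (hf2 x hx).1
  have t : TJ.Tree f v (fun x => G.dist x v) T := ⟨hf, hlt, hv⟩
  have hS : T ∩ TJ.S f v = T := Set.inter_eq_left.2 fun x _ => t.S_root x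
  rcases t.root_typed with j | j
  · rw [hS] at j
    exact (hT (TJ.hasTJoin_of_jn (h := fun x => G.dist x v) hf hlt hadj j)).elim
  · rw [hS, hf] at j
    exact TJ.hasTJoin_of_jn (h := fun x => G.dist x v) hf hlt hadj j
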